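/- Let H and M be real symmetric positive definite n×n matrices with M ≈_ε H for some ε > 0. Then for every v ∈ ℝⁿ, the vector w := (H⁻¹ − M⁻¹)·H·v satisfies wᵀ·H·w ≤ c(ε)² · (vᵀ·H·v), i.e., ‖(H⁻¹ − M⁻¹)·H·v‖_H ≤ c(ε)·‖v‖_H, where ‖u‖_H := sqrt(uᵀ·H·u) and c(ε) := sqrt(1 + e^{2ε} − 2e^{−ε}). -/

import Mathlib

open Matrix

/-- `A ≈_ε B`: `e^{-ε}·B ⪯ A ⪯ e^{ε}·B` in the Loewner order. -/
def SpecApprox {ι : Type*} [Fintype ι] (ε : ℝ) (A B : Matrix ι ι ℝ) : Prop :=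
  (A - Real.exp (-ε) • B).PosSemidef ∧ (Real.exp ε • B - A).PosSemidef

/-- `‖X‖_L = sqrt(trace(Xᵀ L X))`. -/
noncomputable def Lnorm {ι κ : Type*} [Fintype ι] [Fintype κ]
    (L : Matrix ι ι ℝ) (X : Matrix ι κ ℝ) : ℝ :=
  Real.sqrt (Xᵀ * L * X).trace

/-- `c(ε) = sqrt(1 + e^{2ε} − 2e^{−ε})`. -/
noncomputable def cEps (ε : ℝ) : ℝ :=
  Real.sqrt (1 + Real.exp (2 * ε) - 2 * Real.exp (-ε))

/-!
Put `K = H M⁻¹ H`, so that `H (H⁻¹ - M⁻¹) H = H - K`. Inversion is antitone for the Loewner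
order, so conjugating the inverses by `H` turns `M ≈_ε H` into `K ≈_ε H`. Because
`2 - e^{-ε} ≤ e^ε`, this yields `-κ H ⪯ K - H ⪯ κ H` with `κ = e^ε - 1`. A two-sided bound
`-κ H ⪯ A ⪯ κ H` can be squared to `A H⁻¹ A ⪯ κ² H`, since
`κ² H - A H⁻¹ A = (κ H + A) H⁻¹ (κ H - A)` is `2κ` times the parallel sum of
`κ H + A` and `κ H - A`. For `A = K - H`, evaluating at `v` bounds `‖(H⁻¹ - M⁻¹) H v‖_H` by
`(e^ε - 1) ‖v‖_H`, and `e^ε - 1 ≤ c(ε)`.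
-/

section StarOrderedRing

theorem isSelfAdjoint_val_inv {R : Type*} [Monoid R] [StarMul R] {a : Rˣ}
    (ha : IsSelfAdjoint (a : R)) : IsSelfAdjoint (↑a⁻¹ : R) := by
  let _ := a.invertible
  simpa only [invOf_units] using ha.invOf

variable {R : Type*} [Ring R] [PartialOrder R] [StarRing R] [StarOrderedRing R]

theorem val_inv_le_val_inv {a b : Rˣ} (ha : 0 ≤ (a : R)) (hab : (a : R) ≤ b) :
    (↑b⁻¹ : R) ≤ ↑a⁻¹ := by
  have ha_inv := isSelfAdjoint_val_inv (.of_nonneg ha)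
  have hb_inv := isSelfAdjoint_val_inv (.of_nonneg (ha.trans hab))
  have decomposition : (↑a⁻¹ : R) - ↑b⁻¹ =
      (↑a⁻¹ - ↑b⁻¹) * a * (↑a⁻¹ - ↑b⁻¹) + ↑b⁻¹ * (b - a) * ↑b⁻¹ := by
    simp only [sub_mul, mul_sub, Units.inv_mul, Units.mul_inv_cancel_right, one_mul]
    abel
  rw [← sub_nonneg, decomposition]
  exact add_nonneg ((ha_inv.sub hb_inv).conjugate_nonneg ha)
    (hb_inv.conjugate_nonneg (sub_nonneg.2 hab))

theorem mul_inv_mul_nonneg_of_add_eq {x y : R} {s : Rˣ} (hx : 0 ≤ x) (hy : 0 ≤ y)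
    (hxy : x + y = s) : 0 ≤ x * ↑s⁻¹ * y := by
  have hs_inv : IsSelfAdjoint (↑s⁻¹ : R) :=
    isSelfAdjoint_val_inv (.of_nonneg (hxy ▸ add_nonneg hx hy))
  have comm : x * ↑s⁻¹ * y = y * ↑s⁻¹ * x := by
    rw [eq_sub_of_add_eq hxy]
    simp only [sub_mul, mul_sub, Units.mul_inv, Units.inv_mul_cancel_right, one_mul]
  have decomposition :
      x * ↑s⁻¹ * y = x * (↑s⁻¹ * y * ↑s⁻¹) * x + y * (↑s⁻¹ * x * ↑s⁻¹) * y :=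
    calc x * ↑s⁻¹ * y
      _ = x * ↑s⁻¹ * y * ↑s⁻¹ * (x + y) := by rw [hxy, Units.inv_mul_cancel_right]
      _ = x * ↑s⁻¹ * y * ↑s⁻¹ * x + y * ↑s⁻¹ * x * ↑s⁻¹ * y := by rw [mul_add, ← comm]
      _ = _ := by simp only [mul_assoc]
  rw [decomposition]
  exact add_nonneg
    ((IsSelfAdjoint.of_nonneg hx).conjugate_nonneg (hs_inv.conjugate_nonneg hy))
    ((IsSelfAdjoint.of_nonneg hy).conjugate_nonneg (hs_inv.conjugate_nonneg hx))

variable {𝕜 : Type*} [Field 𝕜] [LinearOrder 𝕜] [Algebra 𝕜 R] [PosSMulMono 𝕜 R]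
  {h m : Rˣ} {c : 𝕜}

theorem mul_inv_mul_le_inv_smul (hh : 0 ≤ (h : R)) (hc : 0 < c) (hm : c • (h : R) ≤ m) :
    h * ↑m⁻¹ * h ≤ c⁻¹ • (h : R) := by
  have inv_le : (↑m⁻¹ : R) ≤ c⁻¹ • ↑h⁻¹ :=
    val_inv_le_val_inv (a := Units.mk0 c hc.ne' • h) (smul_nonneg (α := 𝕜) hc.le hh) hm
  simpa using (IsSelfAdjoint.of_nonneg hh).conjugate_le_conjugate inv_le

variable [IsStrictOrderedRing 𝕜]

theorem inv_smul_le_mul_inv_mul (hm : 0 ≤ (m : R)) (hc : 0 < c) (hmh : (m : R) ≤ c • (h : R)) :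
    c⁻¹ • (h : R) ≤ h * ↑m⁻¹ * h := by
  have hh : 0 ≤ (h : R) :=
    (smul_nonneg (inv_nonneg.2 hc.le) hm).trans ((inv_smul_le_iff_of_pos hc).2 hmh)
  have le_inv : c⁻¹ • (↑h⁻¹ : R) ≤ ↑m⁻¹ :=
    val_inv_le_val_inv (b := Units.mk0 c hc.ne' • h) hm hmh
  simpa using (IsSelfAdjoint.of_nonneg hh).conjugate_le_conjugate le_inv

theorem mul_inv_mul_le_sq_smul {a : R} (hc : 0 ≤ c) (hlower : -(c • (h : R)) ≤ a)
    (hupper : a ≤ c • (h : R)) : a * ↑h⁻¹ * a ≤ c ^ 2 • (h : R) := by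
  rcases hc.eq_or_lt with rfl | hc
  · obtain rfl : a = 0 := le_antisymm (by simpa using hupper) (by simpa using hlower)
    simp
  have h2c : 0 < 2 * c := mul_pos two_pos hc
  have sum_eq : (c • ↑h + a) + (c • ↑h - a) = ↑(Units.mk0 (2 * c) h2c.ne' • h) := by
    simp only [Units.val_smul, Units.smul_mk0]
    module
  have scaled : 0 ≤ (2 * c)⁻¹ • ((c • ↑h + a) * ↑h⁻¹ * (c • ↑h - a)) := by
    simpa only [Units.smul_inv, Units.val_smul, Units.smul_def, Units.val_inv_eq_inv_val,
      Units.val_mk0, mul_smul_comm, smul_mul_assoc] using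
      mul_inv_mul_nonneg_of_add_eq (neg_le_iff_add_nonneg'.1 hlower) (sub_nonneg.2 hupper) sum_eq
  have product_eq :
      (c • ↑h + a) * ↑h⁻¹ * (c • ↑h - a) = c ^ 2 • (h : R) - a * ↑h⁻¹ * a := by
    simp only [add_mul, mul_sub, smul_mul_assoc, mul_smul_comm, Units.mul_inv, one_mul,
      Units.inv_mul_cancel_right]
    module
  rw [product_eq] at scaled
  simpa only [smul_inv_smul₀ h2c.ne', sub_nonneg] using smul_nonneg h2c.le scaled

end StarOrderedRing

namespace SpecApprox

open scoped MatrixOrder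

variable {ι : Type*} [Fintype ι] {A B : Matrix ι ι ℝ} {ε : ℝ}

theorem iff_le : SpecApprox ε A B ↔ Real.exp (-ε) • B ≤ A ∧ A ≤ Real.exp ε • B :=
  Iff.rfl

theorem posDef (hAB : SpecApprox ε A B) (hB : B.PosDef) : A.PosDef := by
  simpa using (hB.smul (Real.exp_pos (-ε))).add_posSemidef hAB.1

theorem sub_le_smul (hAB : SpecApprox ε A B) : A - B ≤ (Real.exp ε - 1) • B := by
  rw [sub_smul, one_smul]
  exact sub_le_sub_right (iff_le.1 hAB).2 B

theorem neg_smul_le_sub (hAB : SpecApprox ε A B) (hB : B.PosSemidef) :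
    -((Real.exp ε - 1) • B) ≤ A - B := by
  have one_sub_exp_le : 1 - Real.exp ε ≤ Real.exp (-ε) - 1 := by
    linarith [Real.one_le_cosh ε, Real.cosh_eq ε]
  calc -((Real.exp ε - 1) • B)
    _ = (1 - Real.exp ε) • B := by module
    _ ≤ (Real.exp (-ε) - 1) • B := smul_le_smul_of_nonneg_right one_sub_exp_le hB.nonneg
    _ = Real.exp (-ε) • B - B := by module
    _ ≤ A - B := sub_le_sub_right (iff_le.1 hAB).1 B

variable [DecidableEq ι]

theorem mul_inv_mul (hAB : SpecApprox ε A B) (hB : B.PosDef) :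
    SpecApprox ε (B * A⁻¹ * B) B := by
  have hA := hAB.posDef hB
  obtain ⟨a, rfl⟩ := hA.isUnit
  obtain ⟨b, rfl⟩ := hB.isUnit
  obtain ⟨hlower, hupper⟩ := iff_le.1 hAB
  rw [iff_le, ← coe_units_inv]
  constructor
  · simpa only [Real.exp_neg] using
      inv_smul_le_mul_inv_mul hA.posSemidef.nonneg (Real.exp_pos ε) hupper
  · simpa only [Real.exp_neg, inv_inv] using
      mul_inv_mul_le_inv_smul hB.posSemidef.nonneg (Real.exp_pos (-ε)) hlower

theorem sub_mul_inv_mul_sub_le (hAB : SpecApprox ε A B) (hB : B.PosDef) (hε : 0 ≤ ε) :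
    (A - B) * B⁻¹ * (A - B) ≤ (Real.exp ε - 1) ^ 2 • B := by
  have hlower := hAB.neg_smul_le_sub hB.posSemidef
  have hupper := hAB.sub_le_smul
  obtain ⟨b, rfl⟩ := hB.isUnit
  rw [← coe_units_inv]
  exact mul_inv_mul_le_sq_smul (sub_nonneg.2 (Real.one_le_exp hε)) hlower hupper

end SpecApprox

section QuadraticForm

variable {ι : Type*} [Fintype ι]

theorem mulVec_dotProduct_mulVec_mulVec {κ α : Type*} [Fintype κ] [CommSemiring α]
    (L : Matrix κ κ α) (X : Matrix κ ι α) (v : ι → α) :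
    (X *ᵥ v) ⬝ᵥ (L *ᵥ (X *ᵥ v)) = v ⬝ᵥ ((Xᵀ * L * X) *ᵥ v) := by
  simp only [← mulVec_mulVec, dotProduct_mulVec v, vecMul_transpose]

theorem transpose_inv_sub_inv_mul_mul_inv_sub_inv_mul {α : Type*} [CommRing α] [DecidableEq ι]
    {H M : Matrix ι ι α} (hH : H.IsSymm) (hM : M.IsSymm) (hH_det : IsUnit H.det) :
    ((H⁻¹ - M⁻¹) * H)ᵀ * H * ((H⁻¹ - M⁻¹) * H) =
      (H * M⁻¹ * H - H) * H⁻¹ * (H * M⁻¹ * H - H) := by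
  rw [transpose_mul, transpose_sub, transpose_nonsing_inv, transpose_nonsing_inv, hH.eq, hM.eq]
  simp only [mul_sub, sub_mul, ← mul_assoc, H.mul_nonsing_inv hH_det, one_mul,
    H.nonsing_inv_mul_cancel_right _ hH_det]
  abel

open scoped MatrixOrder ComplexOrder in
theorem star_dotProduct_mulVec_le_of_le {𝕜 : Type*} [RCLike 𝕜] {A B : Matrix ι ι 𝕜}
    (hAB : A ≤ B) (v : ι → 𝕜) : star v ⬝ᵥ (A *ᵥ v) ≤ star v ⬝ᵥ (B *ᵥ v) := by
  simpa only [sub_mulVec, dotProduct_sub, sub_nonneg] using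
    (le_iff.1 hAB).dotProduct_mulVec_nonneg v

end QuadraticForm

theorem sq_exp_sub_one_le_sq_cEps {ε : ℝ} (hε : 0 ≤ ε) :
    (Real.exp ε - 1) ^ 2 ≤ cEps ε ^ 2 := by
  have exp_neg_le : Real.exp (-ε) ≤ Real.exp ε := Real.exp_le_exp.2 (by linarith)
  have le_radicand :
      (Real.exp ε - 1) ^ 2 ≤ 1 + Real.exp (2 * ε) - 2 * Real.exp (-ε) := by
    rw [two_mul ε, Real.exp_add]
    linarith
  rwa [cEps, Real.sq_sqrt ((sq_nonneg _).trans le_radicand)]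

theorem stmt5_general {ι : Type*} [Fintype ι] [DecidableEq ι] {H M : Matrix ι ι ℝ}
    (hH : H.PosDef) {ε : ℝ} (hε : 0 ≤ ε) (hApprox : SpecApprox ε M H) (v : ι → ℝ) :
    ((H⁻¹ - M⁻¹) *ᵥ (H *ᵥ v)) ⬝ᵥ (H *ᵥ ((H⁻¹ - M⁻¹) *ᵥ (H *ᵥ v))) ≤
      (Real.exp ε - 1) ^ 2 * (v ⬝ᵥ (H *ᵥ v)) := by
  have squared_le := (hApprox.mul_inv_mul hH).sub_mul_inv_mul_sub_le hH hε
  have hH_symm : H.IsSymm := isHermitian_iff_isSymm.1 hH.isHermitian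
  have hM_symm : M.IsSymm := isHermitian_iff_isSymm.1 (hApprox.posDef hH).isHermitian
  rw [← transpose_inv_sub_inv_mul_mul_inv_sub_inv_mul hH_symm hM_symm
    (H.isUnit_iff_isUnit_det.1 hH.isUnit)] at squared_le
  rw [mulVec_mulVec, mulVec_dotProduct_mulVec_mulVec]
  simpa only [star_trivial, smul_mulVec, dotProduct_smul, smul_eq_mul] using
    star_dotProduct_mulVec_le_of_le squared_le v

/-- `H`-norm bound: for `w = (H⁻¹ − M⁻¹) H v`,
`wᵀ H w ≤ c(ε)² vᵀ H v`. -/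
theorem stmt5 {n : ℕ} (H M : Matrix (Fin n) (Fin n) ℝ)
    (hH : H.PosDef) (hM : M.PosDef)
    (ε : ℝ) (hε : 0 < ε) (hApprox : SpecApprox ε M H) :
    ∀ v : Fin n → ℝ,
      ((H⁻¹ - M⁻¹) *ᵥ (H *ᵥ v)) ⬝ᵥ (H *ᵥ ((H⁻¹ - M⁻¹) *ᵥ (H *ᵥ v))) ≤
        cEps ε ^ 2 * (v ⬝ᵥ (H *ᵥ v)) := by
  intro v
  exact (stmt5_general hH hε.le hApprox v).trans <|
    mul_le_mul_of_nonneg_right (sq_exp_sub_one_le_sq_cEps hε.le)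
      (hH.posSemidef.dotProduct_mulVec_nonneg v)
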